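/- arXiv:2502.08731 — 2 statements merged into one kernel-verified Lean document; each statement's English description precedes it below -/
import Mathlib

section
/- Suppose γ₀ < 0 < 1 < γ₁ with γ₀ ≠ γ₁, let ν₀, ν₁, D, K be real numbers, let Y₀ ≠ 0 and X₁ ≠ 0 be real coefficients, and let Q̄ > 0 and Q̲ > 0 be the upper and lower demand thresholds. Assume the value-matching and smooth-pasting system holds: Y₀·Q̄^γ₁ = X₁·Q̄^γ₀ + ν₀·Q̄ + ν₁ − D, Y₀·Q̲^γ₁ = X₁·Q̲^γ₀ + ν₀·Q̲ + ν₁ + K, γ₁·Y₀·Q̄^(γ₁−1) = γ₀·X₁·Q̄^(γ₀−1) + ν₀, and γ₁·Y₀·Q̲^(γ₁−1) = γ₀·X₁·Q̲^(γ₀−1) + ν₀. Then the thresholds satisfy the two ratio equations (Q̄/Q̲)^γ₁ = (ν₀(1−γ₀)Q̄ − γ₀(ν₁−D)) / (ν₀(1−γ₀)Q̲ − γ₀(ν₁+K)) and (Q̄/Q̲)^γ₀ = (ν₀(1−γ₁)Q̄ − γ₁(ν₁−D)) / (ν₀(1−γ₁)Q̲ − γ₁(ν₁+K)). -/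
/-!
At a threshold `Q`, value matching and smooth pasting prescribe the value and the slope of
`Y₀ * Q ^ γ₁ - X₁ * Q ^ γ₀`. Since `Q * d/dQ` multiplies `Q ^ γ` by `γ`, the operator
`Q * d/dQ - γ₀` annihilates the `X₁` term and multiplies the `Y₀` term by `γ₁ - γ₀`; the operator
`Q * d/dQ - γ₁` does the opposite. Each power is thus isolated, and dividing the resulting
identities at the two thresholds cancels the unknown coefficient.
-/

theorem sub_mul_mul_rpow_of_value_of_slope {α β A B v s x : ℝ} (hx : x ≠ 0)
    (hv : A * x ^ α + B * x ^ β = v)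
    (hs : α * A * x ^ (α - 1) + β * B * x ^ (β - 1) = s) :
    (α - β) * A * x ^ α = x * s - β * v := by
  have mul_rpow_sub_one (γ : ℝ) : x * x ^ (γ - 1) = x ^ γ := by
    rw [Real.rpow_sub_one hx, mul_div_cancel₀ _ hx]
  have euler : α * A * x ^ α + β * B * x ^ β = x * s := by
    rw [← hs, ← mul_rpow_sub_one α, ← mul_rpow_sub_one β]
    ring
  linear_combination euler - β * hv

theorem div_rpow_eq_div_of_value_of_slope {α β A B x y vx vy sx sy : ℝ}
    (hαβ : α ≠ β) (hA : A ≠ 0) (hx : 0 < x) (hy : 0 < y)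
    (hvx : A * x ^ α + B * x ^ β = vx)
    (hvy : A * y ^ α + B * y ^ β = vy)
    (hsx : α * A * x ^ (α - 1) + β * B * x ^ (β - 1) = sx)
    (hsy : α * A * y ^ (α - 1) + β * B * y ^ (β - 1) = sy) :
    (x / y) ^ α = (x * sx - β * vx) / (y * sy - β * vy) := by
  have hc : (α - β) * A ≠ 0 := mul_ne_zero (sub_ne_zero.mpr hαβ) hA
  rw [← sub_mul_mul_rpow_of_value_of_slope hx.ne' hvx hsx,
    ← sub_mul_mul_rpow_of_value_of_slope hy.ne' hvy hsy,
    mul_div_mul_left _ _ hc, Real.div_rpow hx.le hy.le]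

theorem fare_free_switching_thresholds_general
    (γ₀ γ₁ ν₀ ν₁ D K Y₀ X₁ Qu Ql : ℝ)
    (hγ : γ₀ ≠ γ₁)
    (hY₀ : Y₀ ≠ 0) (hX₁ : X₁ ≠ 0)
    (hQu : 0 < Qu) (hQl : 0 < Ql)
    (hVM_up : Y₀ * Qu ^ γ₁ = X₁ * Qu ^ γ₀ + ν₀ * Qu + ν₁ - D)
    (hVM_lo : Y₀ * Ql ^ γ₁ = X₁ * Ql ^ γ₀ + ν₀ * Ql + ν₁ + K)
    (hSP_up : γ₁ * Y₀ * Qu ^ (γ₁ - 1) = γ₀ * X₁ * Qu ^ (γ₀ - 1) + ν₀)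
    (hSP_lo : γ₁ * Y₀ * Ql ^ (γ₁ - 1) = γ₀ * X₁ * Ql ^ (γ₀ - 1) + ν₀) :
    (Qu / Ql) ^ γ₁ =
      (ν₀ * (1 - γ₀) * Qu - γ₀ * (ν₁ - D)) / (ν₀ * (1 - γ₀) * Ql - γ₀ * (ν₁ + K)) ∧
    (Qu / Ql) ^ γ₀ =
      (ν₀ * (1 - γ₁) * Qu - γ₁ * (ν₁ - D)) / (ν₀ * (1 - γ₁) * Ql - γ₁ * (ν₁ + K)) := by
  have value_up : Y₀ * Qu ^ γ₁ + -X₁ * Qu ^ γ₀ = ν₀ * Qu + (ν₁ - D) := by linarith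
  have value_lo : Y₀ * Ql ^ γ₁ + -X₁ * Ql ^ γ₀ = ν₀ * Ql + (ν₁ + K) := by linarith
  have slope_up : γ₁ * Y₀ * Qu ^ (γ₁ - 1) + γ₀ * -X₁ * Qu ^ (γ₀ - 1) = ν₀ := by linarith
  have slope_lo : γ₁ * Y₀ * Ql ^ (γ₁ - 1) + γ₀ * -X₁ * Ql ^ (γ₀ - 1) = ν₀ := by linarith
  have eliminant_eq (γ Q c : ℝ) : ν₀ * (1 - γ) * Q - γ * c = Q * ν₀ - γ * (ν₀ * Q + c) := by ring
  simp only [eliminant_eq]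
  constructor
  · exact div_rpow_eq_div_of_value_of_slope hγ.symm hY₀ hQu hQl
      value_up value_lo slope_up slope_lo
  · rw [add_comm] at value_up value_lo slope_up slope_lo
    exact div_rpow_eq_div_of_value_of_slope hγ (neg_ne_zero.mpr hX₁) hQu hQl
      value_up value_lo slope_up slope_lo

/-- Proposition 1 (Appendix A): with positive switching costs, the value-matching and
smooth-pasting system at the upper threshold `Qu` and lower threshold `Ql` implies the
two ratio equations characterizing the thresholds. -/
theorem fare_free_switching_thresholds
    (γ₀ γ₁ ν₀ ν₁ D K Y₀ X₁ Qu Ql : ℝ)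
    (hγ₀ : γ₀ < 0) (hγ₁ : 1 < γ₁) (hγ : γ₀ ≠ γ₁)
    (hY₀ : Y₀ ≠ 0) (hX₁ : X₁ ≠ 0)
    (hQu : 0 < Qu) (hQl : 0 < Ql)
    (hVM_up : Y₀ * Qu ^ γ₁ = X₁ * Qu ^ γ₀ + ν₀ * Qu + ν₁ - D)
    (hVM_lo : Y₀ * Ql ^ γ₁ = X₁ * Ql ^ γ₀ + ν₀ * Ql + ν₁ + K)
    (hSP_up : γ₁ * Y₀ * Qu ^ (γ₁ - 1) = γ₀ * X₁ * Qu ^ (γ₀ - 1) + ν₀)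
    (hSP_lo : γ₁ * Y₀ * Ql ^ (γ₁ - 1) = γ₀ * X₁ * Ql ^ (γ₀ - 1) + ν₀) :
    (Qu / Ql) ^ γ₁ =
      (ν₀ * (1 - γ₀) * Qu - γ₀ * (ν₁ - D)) / (ν₀ * (1 - γ₀) * Ql - γ₀ * (ν₁ + K)) ∧
    (Qu / Ql) ^ γ₀ =
      (ν₀ * (1 - γ₁) * Qu - γ₁ * (ν₁ - D)) / (ν₀ * (1 - γ₁) * Ql - γ₁ * (ν₁ + K)) := by
  exact fare_free_switching_thresholds_general γ₀ γ₁ ν₀ ν₁ D K Y₀ X₁ Qu Ql hγ hY₀ hX₁ hQu hQl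
    hVM_up hVM_lo hSP_up hSP_lo
end

section
/- Suppose γ₀ < 0 and γ₁ > 1, let ν₀ ≠ 0 and ν₁ be real numbers, let Y₀, X₁ be real coefficients, and let Q* > 0. Assume the value-matching, smooth-pasting, and second-order matching conditions hold at Q*: Y₀·Q*^γ₁ = X₁·Q*^γ₀ + ν₀·Q* + ν₁, γ₁·Y₀·Q*^(γ₁−1) = γ₀·X₁·Q*^(γ₀−1) + ν₀, and γ₁(γ₁−1)·Y₀·Q*^(γ₁−2) = γ₀(γ₀−1)·X₁·Q*^(γ₀−2). Then the single switching threshold satisfies Q* = γ₀γ₁ν₁ / ((1−γ₀)(γ₁−1)ν₀). -/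
/-!
The Euler operator `θ = Q · d/dQ` satisfies `θ (Q ^ γ) = γ · Q ^ γ`, so `(θ - γ₀) (θ - γ₁)`
annihilates `Q ^ γ₀` and `Q ^ γ₁` and turns `V₁ - V₀` into
`(1 - γ₀) * (1 - γ₁) * ν₀ * Q + γ₀ * γ₁ * ν₁`. Since `V₁ - V₀` and its first two derivatives vanish
at the threshold, so does this affine function of `Q`.
-/

lemma rpow_sub_one_mul_self {x : ℝ} (hx : x ≠ 0) (y : ℝ) : x ^ (y - 1) * x = x ^ y := by
  rw [Real.rpow_sub_one hx, div_mul_cancel₀ _ hx]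

lemma rpow_sub_two_mul_sq {x : ℝ} (hx : x ≠ 0) (y : ℝ) : x ^ (y - 2) * x ^ 2 = x ^ y := by
  rw [← Nat.cast_two, Real.rpow_sub_natCast hx, div_mul_cancel₀ _ (pow_ne_zero 2 hx)]

lemma one_sub_mul_sub_one_mul_eq_of_matching {R : Type*} [CommRing R] {γ₀ γ₁ a b s c : R}
    (value : a = b + s + c)
    (slope : γ₁ * a = γ₀ * b + s)
    (curvature : γ₁ * (γ₁ - 1) * a = γ₀ * (γ₀ - 1) * b) :
    (1 - γ₀) * (γ₁ - 1) * s = γ₀ * γ₁ * c := by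
  -- `(θ - γ₀) (θ - γ₁) = θ (θ - 1) + (1 - γ₀ - γ₁) θ + γ₀ γ₁`
  linear_combination curvature + (1 - γ₀ - γ₁) * slope + γ₀ * γ₁ * value

theorem fare_free_single_threshold_general
    (γ₀ γ₁ ν₀ ν₁ Y₀ X₁ Qs : ℝ)
    (hγ₀ : γ₀ ≠ 1) (hγ₁ : γ₁ ≠ 1) (hν₀ : ν₀ ≠ 0) (hQs : 0 < Qs)
    (hVM : Y₀ * Qs ^ γ₁ = X₁ * Qs ^ γ₀ + ν₀ * Qs + ν₁)
    (hSP : γ₁ * Y₀ * Qs ^ (γ₁ - 1) = γ₀ * X₁ * Qs ^ (γ₀ - 1) + ν₀)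
    (hSO : γ₁ * (γ₁ - 1) * Y₀ * Qs ^ (γ₁ - 2) = γ₀ * (γ₀ - 1) * X₁ * Qs ^ (γ₀ - 2)) :
    Qs = γ₀ * γ₁ * ν₁ / ((1 - γ₀) * (γ₁ - 1) * ν₀) := by
  have slope : γ₁ * (Y₀ * Qs ^ γ₁) = γ₀ * (X₁ * Qs ^ γ₀) + ν₀ * Qs := by
    rw [← rpow_sub_one_mul_self hQs.ne' γ₁, ← rpow_sub_one_mul_self hQs.ne' γ₀]
    linear_combination Qs * hSP
  have curvature :
      γ₁ * (γ₁ - 1) * (Y₀ * Qs ^ γ₁) = γ₀ * (γ₀ - 1) * (X₁ * Qs ^ γ₀) := by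
    rw [← rpow_sub_two_mul_sq hQs.ne' γ₁, ← rpow_sub_two_mul_sq hQs.ne' γ₀]
    linear_combination Qs ^ 2 * hSO
  have threshold_eq : (1 - γ₀) * (γ₁ - 1) * (ν₀ * Qs) = γ₀ * γ₁ * ν₁ :=
    one_sub_mul_sub_one_mul_eq_of_matching hVM slope curvature
  have denom_ne_zero : (1 - γ₀) * (γ₁ - 1) * ν₀ ≠ 0 :=
    mul_ne_zero (mul_ne_zero (sub_ne_zero.mpr hγ₀.symm) (sub_ne_zero.mpr hγ₁)) hν₀
  rw [eq_div_iff denom_ne_zero, ← threshold_eq]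
  ring

/-- Proposition 2 (Appendix B): with zero switching costs, value matching, smooth pasting,
and second-order matching at a single threshold `Qs` determine
`Qs = γ₀γ₁ν₁ / ((1−γ₀)(γ₁−1)ν₀)`. -/
theorem fare_free_single_threshold
    (γ₀ γ₁ ν₀ ν₁ Y₀ X₁ Qs : ℝ)
    (hγ₀ : γ₀ < 0) (hγ₁ : 1 < γ₁) (hν₀ : ν₀ ≠ 0) (hQs : 0 < Qs)
    (hVM : Y₀ * Qs ^ γ₁ = X₁ * Qs ^ γ₀ + ν₀ * Qs + ν₁)
    (hSP : γ₁ * Y₀ * Qs ^ (γ₁ - 1) = γ₀ * X₁ * Qs ^ (γ₀ - 1) + ν₀)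
    (hSO : γ₁ * (γ₁ - 1) * Y₀ * Qs ^ (γ₁ - 2) = γ₀ * (γ₀ - 1) * X₁ * Qs ^ (γ₀ - 2)) :
    Qs = γ₀ * γ₁ * ν₁ / ((1 - γ₀) * (γ₁ - 1) * ν₀) :=
  fare_free_single_threshold_general γ₀ γ₁ ν₀ ν₁ Y₀ X₁ Qs (hγ₀.trans zero_lt_one).ne hγ₁.ne'
    hν₀ hQs hVM hSP hSO
end
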